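/- arXiv:1501.00715 — 8 statements merged into one kernel-verified Lean document; each statement's English description precedes it below -/
import Mathlib

section
/- Let n, a, b be natural numbers with 1 ≤ a ≤ b ≤ n. Then there exists a finite list of natural numbers, each lying in the interval [a, b], whose sum equals n, if and only if a divides n, or b divides n, or n / a > n / b, where / denotes integer (floor) division. -/
theorem aux_list (a b : ℕ) (hab : a ≤ b) : ∀ k n : ℕ, k * a ≤ n → n ≤ k * b →
    ∃ l : List ℕ, l.length = k ∧ (∀ x ∈ l, a ≤ x ∧ x ≤ b) ∧ l.sum = n := by
  intro k
  induction k with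
  | zero =>
    intro n _ h
    exact ⟨[], rfl, by simp, by simp at h; simp [h]⟩
  | succ k ih =>
    intro n h1 h2
    have h3 : k * a ≤ k * b := Nat.mul_le_mul_left k hab
    rw [Nat.add_mul, Nat.one_mul] at h1 h2
    obtain ⟨x, hx1, hx2, hx3, hx4, hx5⟩ :
        ∃ x, a ≤ x ∧ x ≤ b ∧ x ≤ n ∧ k * a ≤ n - x ∧ n - x ≤ k * b :=
      ⟨max a (n - k * b), by omega, by omega, by omega, by omega, by omega⟩
    obtain ⟨l, hl, hm, hs⟩ := ih (n - x) hx4 hx5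
    refine ⟨x :: l, by simp [hl], ?_, by simp [hs]; omega⟩
    intro y hy
    rcases List.mem_cons.1 hy with rfl | hy
    · exact ⟨hx1, hx2⟩
    · exact hm y hy

theorem aux_bound (a b : ℕ) (l : List ℕ) (h : ∀ x ∈ l, a ≤ x ∧ x ≤ b) :
    l.length * a ≤ l.sum ∧ l.sum ≤ l.length * b := by
  induction l with
  | nil => simp
  | cons x l ih =>
    have h1 := ih (fun y hy => h y (List.mem_cons_of_mem _ hy))
    have h2 := h x List.mem_cons_self
    simp only [List.length_cons, List.sum_cons, Nat.add_mul, Nat.one_mul]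
    omega

/-- `n` players can be divided into (one or more) teams with sizes in `[a, b]`
iff `a ∣ n`, `b ∣ n`, or `n / a > n / b` (integer division). -/
theorem stmt1 (n a b : ℕ) (ha : 1 ≤ a) (hab : a ≤ b) (hbn : b ≤ n) :
    (∃ l : List ℕ, l ≠ [] ∧ (∀ x ∈ l, a ≤ x ∧ x ≤ b) ∧ l.sum = n) ↔
      (a ∣ n ∨ b ∣ n ∨ n / b < n / a) := by
  constructor
  · rintro ⟨l, -, hm, rfl⟩
    obtain ⟨h1, h2⟩ := aux_bound a b l hm
    rcases h2.eq_or_lt with h | h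
    · exact Or.inr (Or.inl (h ▸ Dvd.intro_left _ rfl))
    · refine Or.inr (Or.inr ?_)
      exact lt_of_lt_of_le ((Nat.div_lt_iff_lt_mul (by omega)).2 h)
        ((Nat.le_div_iff_mul_le (by omega)).2 h1)
  · intro h
    have key : ∃ k, k * a ≤ n ∧ n ≤ k * b := by
      rcases h with ⟨k, rfl⟩ | ⟨k, rfl⟩ | h
      · exact ⟨k, (Nat.mul_comm _ _).le, by rw [Nat.mul_comm]; exact Nat.mul_le_mul_left k hab⟩
      · exact ⟨k, by rw [Nat.mul_comm b]; exact Nat.mul_le_mul_left k hab, (Nat.mul_comm _ _).le⟩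
      · exact ⟨n / a, Nat.div_mul_le_self n a, ((Nat.div_lt_iff_lt_mul (by omega)).1 h).le⟩
    obtain ⟨k, h1, h2⟩ := key
    obtain ⟨l, -, hm, hs⟩ := aux_list a b hab k n h1 h2
    refine ⟨l, ?_, hm, hs⟩
    rintro rfl
    simp at hs
    omega
end

section
/- For the 6-agent team formation instance with utility table u(A,·)=(B:1,C:0,D:2,E:3,F:2), u(B,·)=(A:2,C:1,D:0,E:3,F:2), u(C,·)=(A:2,B:2,D:1,E:0,F:3), u(D,·)=(A:1,B:2,C:2,E:2,F:1), u(E,·)=(A:0,B:2,C:3,D:1,F:2), u(F,·)=(A:2,B:1,C:2,D:2,E:1), the maximin share guarantee for team formation is not satisfiable: there is no partition of the six agents into two disjoint teams of size 3 such that every agent i receives utility Σ_{j ∈ T(i)\{i}} u(i,j) at least equal to its maximin share value m(i), where m(i) is the maximum over all partitions Q into two size-3 teams of the minimum of Σ_{j ∈ T_Q(i)\{i}} u(i,j) and of Σ_{k ∈ T_Q(j)\{j}} u(i,k) over all agents j on the team of Q not containing i. -/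
/-- Utility table: agents A..F are `0..5`; diagonal entries are irrelevant (set to 0). -/
def u1 : Fin 6 → Fin 6 → ℝ :=
  ![![0, 1, 0, 2, 3, 2],
    ![2, 0, 1, 0, 3, 2],
    ![2, 2, 0, 1, 0, 3],
    ![1, 2, 2, 0, 2, 1],
    ![0, 2, 3, 1, 0, 2],
    ![2, 1, 2, 2, 1, 0]]

/-- The team (of the partition `{Q, Qᶜ}`) containing agent `i`. -/
def teamOf (Q : Finset (Fin 6)) (i : Fin 6) : Finset (Fin 6) :=
  if i ∈ Q then Q else Qᶜ

/-- The minimum, over all teams agent `i` could obtain by swapping positions with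
some agent `j` in partition `{Q, Qᶜ}` (its own team, or the team of any `j` on the
other team, with `j` removed), of the value of that team to `i`. -/
noncomputable def minShare (i : Fin 6) (Q : Finset (Fin 6)) : ℝ :=
  sInf {v : ℝ |
    v = ∑ k ∈ (teamOf Q i).erase i, u1 i k ∨
    ∃ j : Fin 6, teamOf Q j ≠ teamOf Q i ∧ v = ∑ k ∈ (teamOf Q j).erase j, u1 i k}

/-- Agent `i`'s maximin share value: the maximum over all partitions into two
size-3 teams of `minShare i`. -/
noncomputable def mms (i : Fin 6) : ℝ :=
  sSup {v : ℝ | ∃ Q : Finset (Fin 6), Q.card = 3 ∧ v = minShare i Q}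

/-- Natural-number copy of the utility table. -/
def uN : Fin 6 → Fin 6 → ℕ :=
  ![![0, 1, 0, 2, 3, 2],
    ![2, 0, 1, 0, 3, 2],
    ![2, 2, 0, 1, 0, 3],
    ![1, 2, 2, 0, 2, 1],
    ![0, 2, 3, 1, 0, 2],
    ![2, 1, 2, 2, 1, 0]]

theorem u1_eq (i k : Fin 6) : u1 i k = (uN i k : ℝ) := by
  fin_cases i <;> fin_cases k <;> simp [u1, uN]

theorem sum_u1 (i : Fin 6) (S : Finset (Fin 6)) :
    ∑ k ∈ S, u1 i k = ((∑ k ∈ S, uN i k : ℕ) : ℝ) := by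
  push_cast
  exact Finset.sum_congr rfl fun k _ => u1_eq i k

/-- A maximin split for each agent. -/
def split : Fin 6 → Finset (Fin 6) :=
  ![{0, 2, 4}, {0, 2, 5}, {0, 1, 3}, {0, 1, 2}, {0, 2, 4}, {0, 1, 2}]

theorem split_card : ∀ i, (split i).card = 3 := by decide

theorem split_own : ∀ i, 3 ≤ ∑ k ∈ (teamOf (split i) i).erase i, uN i k := by decide

theorem split_other : ∀ i j, teamOf (split i) j ≠ teamOf (split i) i →
    3 ≤ ∑ k ∈ (teamOf (split i) j).erase j, uN i k := by decide

theorem three_le_minShare (i : Fin 6) : 3 ≤ minShare i (split i) := by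
  unfold minShare
  apply le_csInf
  · exact ⟨_, Or.inl rfl⟩
  · rintro v (rfl | ⟨j, hj, rfl⟩)
    · rw [sum_u1]
      exact_mod_cast split_own i
    · rw [sum_u1]
      exact_mod_cast split_other i j hj

theorem three_le_mms (i : Fin 6) : 3 ≤ mms i := by
  refine (three_le_minShare i).trans ?_
  unfold mms
  apply le_csSup
  · refine ((Set.finite_range (minShare i)).subset ?_).bddAbove
    rintro v ⟨Q, _, rfl⟩
    exact ⟨Q, rfl⟩
  · exact ⟨_, split_card i, rfl⟩

theorem no_good : ∀ T : Finset (Fin 6), T.card = 3 →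
    ∃ i, ∑ k ∈ (teamOf T i).erase i, uN i k < 3 := by
  decide +kernel

/-- The maximin share guarantee is not satisfiable for this instance: no partition
into two size-3 teams gives every agent at least its maximin share value. -/
theorem stmt4 :
    ¬ ∃ T : Finset (Fin 6), T.card = 3 ∧
      ∀ i : Fin 6, mms i ≤ ∑ j ∈ (teamOf T i).erase i, u1 i j := by
  rintro ⟨T, hT, h⟩
  obtain ⟨i, hi⟩ := no_good T hT
  have h1 := (three_le_mms i).trans (h i)
  rw [sum_u1] at h1
  have h2 : 3 ≤ ∑ k ∈ (teamOf T i).erase i, uN i k := by exact_mod_cast h1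
  omega
end

section
/- Consider the 4-agent team formation instance with agents {A,B,C,D}, required team size exactly 2, and utility table u(A,·)=(B:2,C:1,D:0), u(B,·)=(A:0,C:2,D:1), u(C,·)=(A:1,B:0,D:2), u(D,·)=(A:2,B:1,C:0). There do not exist a budget vector b : {A,B,C,D} → ℝ and a nonnegative price vector p : {A,B,C,D} → ℝ that induce exact market clearing; that is, there is no map D_m : {A,B,C,D} → {A,B,C,D} such that (i) D_m is an involution with no fixed points, (ii) for every agent i, p(D_m(i)) ≤ b(i), and (iii) for every agent i and every agent k ≠ i with p(k) ≤ b(i), u(i,k) ≤ u(i, D_m(i)) (i.e., each agent is assigned its most-preferred affordable partner, and demands are reciprocal). -/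
/-- Utility table: agents A..D are `0..3`; diagonal entries are irrelevant (set to 0). -/
def u6 : Fin 4 → Fin 4 → ℝ :=
  ![![0, 2, 1, 0],
    ![0, 0, 2, 1],
    ![1, 0, 0, 2],
    ![2, 1, 0, 0]]

/-- With team size exactly 2, no budgets `b` and nonnegative prices `p` induce exact
market clearing: there is no fixed-point-free involution `Dm` (pairing of the agents)
such that each agent can afford its partner and each agent's partner is its
most-preferred affordable agent. -/
theorem stmt6 :
    ¬ ∃ (b p : Fin 4 → ℝ), (∀ i, 0 ≤ p i) ∧
      ∃ Dm : Fin 4 → Fin 4,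
        (∀ i, Dm (Dm i) = i) ∧
        (∀ i, Dm i ≠ i) ∧
        (∀ i, p (Dm i) ≤ b i) ∧
        (∀ i k, k ≠ i → p k ≤ b i → u6 i k ≤ u6 i (Dm i)) := by
  rintro ⟨b, p, -, Dm, h1, h2, h3, h4⟩
  have key : ∀ i j k, Dm i = j → k ≠ i → u6 i j < u6 i k → p j < p k := by
    intro i j k hj hk hu
    subst hj
    by_contra hc
    exact absurd (h4 i k hk ((not_lt.mp hc).trans (h3 i))) (not_le.mpr hu)
  have comb : (Dm 0 = 1 ∧ Dm 1 = 0 ∧ Dm 2 = 3 ∧ Dm 3 = 2) ∨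
      (Dm 0 = 2 ∧ Dm 1 = 3 ∧ Dm 2 = 0 ∧ Dm 3 = 1) ∨
      (Dm 0 = 3 ∧ Dm 1 = 2 ∧ Dm 2 = 1 ∧ Dm 3 = 0) := by
    clear key h3 h4
    revert Dm
    decide +kernel
  rcases comb with ⟨a0, a1, a2, a3⟩ | ⟨a0, a1, a2, a3⟩ | ⟨a0, a1, a2, a3⟩
  · have e1 := key 1 0 2 a1 (by decide) (show (0:ℝ) < 2 from zero_lt_two)
    have e2 := key 3 2 0 a3 (by decide) (show (0:ℝ) < 2 from zero_lt_two)
    exact lt_asymm e1 e2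
  · have e1 := key 0 2 1 a0 (by decide) (show (1:ℝ) < 2 from one_lt_two)
    have e2 := key 1 3 2 a1 (by decide) (show (1:ℝ) < 2 from one_lt_two)
    have e3 := key 2 0 3 a2 (by decide) (show (1:ℝ) < 2 from one_lt_two)
    have e4 := key 3 1 0 a3 (by decide) (show (1:ℝ) < 2 from one_lt_two)
    linarith
  · have e1 := key 0 3 1 a0 (by decide) (show (0:ℝ) < 2 from zero_lt_two)
    have e2 := key 2 1 3 a2 (by decide) (show (0:ℝ) < 2 from zero_lt_two)
    exact lt_asymm e1 e2
end

section
/- Let X be a compact convex subset of ℝ^d containing at least two points, and let f : X → X be any function mapping X into itself. Then there exists a point x* ∈ X such that x* lies in the convex hull of the set { y ∈ X | there exists a sequence (x_n) with x_n ∈ X, x_n ≠ x* for all n, x_n → x*, and f(x_n) → y }. -/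
open Filter


lemma det_interp (d : ℕ) (δ : ℝ) (hδ : 0 < δ) :
    ∃ τ c : Fin (d+1) → ℝ, (∀ i, 0 < τ i ∧ τ i < δ) ∧ ∑ i, c i = 1 ∧
      ∀ A : EuclideanSpace ℝ (Fin d) →L[ℝ] EuclideanSpace ℝ (Fin d),
        (ContinuousLinearMap.id ℝ _ + A).det
          = ∑ i, c i * (ContinuousLinearMap.id ℝ _ + τ i • A).det := by
  classical
  set τ : Fin (d+1) → ℝ := fun i => δ / ((i:ℕ) + 2) with hτ
  have hinj : Set.InjOn τ ((Finset.univ : Finset (Fin (d+1))) : Set _) := by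
    intro i _ j _ h
    simp only [hτ] at h
    have h1 : ((i:ℕ):ℝ) + 2 = (j:ℕ) + 2 := by
      have h2 : ((i:ℕ):ℝ) + 2 ≠ 0 := by positivity
      have h3 : ((j:ℕ):ℝ) + 2 ≠ 0 := by positivity
      field_simp at h
      linarith
    have h4 : ((i:ℕ):ℝ) = (j:ℕ) := by linarith
    exact Fin.ext (by exact_mod_cast h4)
  refine ⟨τ, fun i => (Lagrange.basis Finset.univ τ i).eval 1, ?_, ?_, ?_⟩
  · intro i
    refine ⟨by simp only [hτ]; positivity, ?_⟩
    simp only [hτ]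
    rw [div_lt_iff₀ (by positivity)]
    have : (0:ℝ) ≤ (i:ℕ) := by positivity
    nlinarith
  · rw [← Polynomial.eval_finsetSum, Lagrange.sum_basis hinj ⟨0, Finset.mem_univ _⟩]
    simp
  · intro A
    set b : Module.Basis (Fin d) ℝ (EuclideanSpace ℝ (Fin d)) := (EuclideanSpace.basisFun (Fin d) ℝ).toBasis
    set M := LinearMap.toMatrix b b (A : EuclideanSpace ℝ (Fin d) →ₗ[ℝ] EuclideanSpace ℝ (Fin d)) with hM
    set p : Polynomial ℝ := ((Polynomial.X : Polynomial ℝ) • M.map (⇑(Polynomial.C : ℝ →+* Polynomial ℝ)) + (1 : Matrix (Fin d) (Fin d) ℝ).map (⇑(Polynomial.C : ℝ →+* Polynomial ℝ))).det with hp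
    have hdeg : p.degree < ((Finset.univ : Finset (Fin (d+1))).card : WithBot ℕ) := by
      have h1 := Polynomial.natDegree_det_X_add_C_le M (1 : Matrix (Fin d) (Fin d) ℝ)
      rw [← hp] at h1
      refine lt_of_le_of_lt Polynomial.degree_le_natDegree ?_
      simp only [Finset.card_univ, Fintype.card_fin] at h1 ⊢
      exact_mod_cast Nat.lt_succ_of_le h1
    have hev : ∀ t : ℝ, p.eval t = (ContinuousLinearMap.id ℝ _ + t • A).det := by
      intro t
      rw [ContinuousLinearMap.det, ← LinearMap.det_toMatrix b, hp, ← Polynomial.coe_evalRingHom,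
        RingHom.map_det]
      congr 1
      ext i j
      by_cases hij : i = j
      · simp [hM, Matrix.add_apply, Matrix.one_apply, LinearMap.toMatrix_apply, hij, b]
        ring
      · simp [hM, Matrix.add_apply, Matrix.one_apply, LinearMap.toMatrix_apply, hij, b]
        ring
    have h := Lagrange.eq_interpolate hinj hdeg
    have h2 := congrArg (Polynomial.eval 1) h
    rw [hev, one_smul] at h2
    rw [h2, Lagrange.interpolate_apply, Polynomial.eval_finsetSum]
    refine Finset.sum_congr rfl fun i _ => ?_
    rw [Polynomial.eval_mul, Polynomial.eval_C, hev, mul_comm]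


lemma isCompact_convexHull_aux (d : ℕ) (s : Set (EuclideanSpace ℝ (Fin d))) (hs : IsCompact s) :
    IsCompact (convexHull ℝ s) := by
  classical
  have key : convexHull ℝ s = (fun q : (Fin (d+1) → ℝ) × (Fin (d+1) → EuclideanSpace ℝ (Fin d)) =>
      ∑ i, q.1 i • q.2 i) '' ((stdSimplex ℝ (Fin (d+1))) ×ˢ (Set.univ.pi fun _ => s)) := by
    apply Set.Subset.antisymm
    · intro x hx
      rw [convexHull_eq_union] at hx
      simp only [Set.mem_iUnion] at hx
      obtain ⟨t, hts, hai, hxt⟩ := hx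
      have hne : t.Nonempty := by
        rw [← Finset.coe_nonempty, ← convexHull_nonempty_iff (𝕜 := ℝ)]; exact ⟨x, hxt⟩
      have hcard : t.card ≤ d + 1 := by
        have := hai.card_le_finrank_succ
        have h2 := Submodule.finrank_le (vectorSpan ℝ (Set.range ((↑) : t → EuclideanSpace ℝ (Fin d))))
        simp at this h2
        omega
      have : Nonempty t := hne.to_subtype
      obtain ⟨e⟩ : Nonempty (t ↪ Fin (d+1)) := by
        apply Function.Embedding.nonempty_of_card_le
        simpa using hcard
      set v : Fin (d+1) → EuclideanSpace ℝ (Fin d) := fun i => (Function.invFun e i : t) with hv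
      have hr : Set.range v = (t : Set _) := by
        ext y; constructor
        · rintro ⟨i, rfl⟩; exact (Function.invFun e i).2
        · intro hy
          refine ⟨e ⟨y, hy⟩, ?_⟩
          simp [hv, Function.leftInverse_invFun e.injective _]
      rw [← hr] at hxt
      have hr2 : Set.range v = (Fintype.linearCombination ℝ v) ''
          (Set.range fun i j : Fin (d+1) => if i = j then (1:ℝ) else 0) := by
        rw [← Set.range_comp]
        congr 1
        ext1 i
        simp [Fintype.linearCombination_apply]
      rw [hr2, ← LinearMap.image_convexHull, convexHull_basis_eq_stdSimplex] at hxt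
      obtain ⟨w, hw, rfl⟩ := hxt
      refine ⟨(w, v), ⟨hw, fun i _ => hts (by rw [← hr]; exact ⟨i, rfl⟩)⟩, ?_⟩
      simp [Fintype.linearCombination_apply]
    · rintro x ⟨⟨w, v⟩, ⟨hw, hv⟩, rfl⟩
      simp only [Set.mem_pi, Set.mem_univ, true_imp_iff] at hv
      exact (convex_convexHull ℝ s).sum_mem (fun i _ => hw.1 i) hw.2
        (fun i _ => subset_convexHull ℝ s (hv i))
  rw [key]
  apply IsCompact.image
  · exact (isCompact_stdSimplex ℝ _).prod (isCompact_univ_pi fun _ => hs)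
  · fun_prop

lemma lip_ext (d : ℕ) (R : ℝ) (K : NNReal) (g : EuclideanSpace ℝ (Fin d) → EuclideanSpace ℝ (Fin d))
    (hg : LipschitzOnWith K g (Metric.closedBall 0 R)) (h0 : ∀ x, ‖x‖ = R → g x = 0) :
    LipschitzWith K ((Metric.closedBall 0 R).indicator g) := by
  have key : ∀ x y, ‖x‖ ≤ R → R < ‖y‖ → ‖g x‖ ≤ K * ‖x - y‖ := by
    intro x y hx hy
    obtain ⟨z, hz, hzR⟩ : R ∈ norm '' (segment ℝ x y) :=
      (convex_segment x y).isPreconnected.intermediate_value (left_mem_segment ℝ x y)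
        (right_mem_segment ℝ x y) continuous_norm.continuousOn ⟨hx, hy.le⟩
    have h1 := hg.dist_le_mul x (by simpa using hx) z (by simp [hzR])
    rw [h0 z hzR, dist_zero_right, dist_eq_norm] at h1
    refine h1.trans (mul_le_mul_of_nonneg_left ?_ K.2)
    obtain ⟨a, b, ha, hb, hab, rfl⟩ := hz
    have : x - (a • x + b • y) = b • (x - y) := by
      have : a = 1 - b := by linarith
      rw [this]; module
    rw [this, norm_smul, Real.norm_of_nonneg hb]
    have : b ≤ 1 := by linarith
    nlinarith [norm_nonneg (x - y)]
  refine LipschitzWith.of_dist_le_mul fun x y => ?_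
  by_cases hx : x ∈ Metric.closedBall (0 : EuclideanSpace ℝ (Fin d)) R <;>
  by_cases hy : y ∈ Metric.closedBall (0 : EuclideanSpace ℝ (Fin d)) R
  · rw [Set.indicator_of_mem hx, Set.indicator_of_mem hy]
    exact hg.dist_le_mul x hx y hy
  · rw [Set.indicator_of_mem hx, Set.indicator_of_notMem hy, dist_zero_right, dist_eq_norm]
    exact key x y (by simpa using hx) (by simpa using hy)
  · rw [Set.indicator_of_notMem hx, Set.indicator_of_mem hy, dist_zero_left, dist_comm, dist_eq_norm]
    exact key y x (by simpa using hy) (by simpa using hx)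
  · rw [Set.indicator_of_notMem hx, Set.indicator_of_notMem hy]
    simp only [dist_self]; positivity

lemma no_retraction (d : ℕ) (R : ℝ) (hR : 0 < R)
    (r : EuclideanSpace ℝ (Fin d) → EuclideanSpace ℝ (Fin d))
    (hr : ∀ x, ‖x‖ ≤ R → ContDiffAt ℝ 1 r x)
    (hrS : ∀ x, ‖x‖ ≤ R → ‖r x‖ = R) (hrid : ∀ x, ‖x‖ = R → r x = x) : False := by
  set g : (EuclideanSpace ℝ (Fin d)) → (EuclideanSpace ℝ (Fin d)) := fun x => r x - x with hg
  have hgc : ∀ x, ‖x‖ ≤ R → ContDiffAt ℝ 1 g x := fun x hx => (hr x hx).sub contDiffAt_id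
  have hgd : ∀ x, ‖x‖ ≤ R → DifferentiableAt ℝ g x :=
    fun x hx => (hgc x hx).differentiableAt (by norm_num)
  have hgf : ContinuousOn (fderiv ℝ g) (Metric.closedBall 0 R) := fun x hx =>
    ((hgc x (by simpa using hx)).fderiv_right (m := 0) (by norm_num)).continuousAt.continuousWithinAt
  obtain ⟨K0, hK0⟩ := (isCompact_closedBall (0:(EuclideanSpace ℝ (Fin d))) R).exists_bound_of_continuousOn hgf
  set K : NNReal := Real.toNNReal (max K0 1) with hK
  have hKv : (K : ℝ) = max K0 1 := Real.coe_toNNReal _ (by positivity)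
  have hKpos : (0:ℝ) < K := by rw [hKv]; positivity
  have hbound : ∀ x ∈ Metric.closedBall (0:(EuclideanSpace ℝ (Fin d))) R, ‖fderiv ℝ g x‖ ≤ K := fun x hx => by
    rw [hKv]; exact (hK0 x hx).trans (le_max_left _ _)
  have hlip : LipschitzOnWith K g (Metric.closedBall 0 R) :=
    Convex.lipschitzOnWith_of_nnnorm_fderiv_le (𝕜 := ℝ) (fun x hx => hgd x (by simpa using hx))
      (fun x hx => hbound x hx) (convex_closedBall _ _)
  have hlipE := lip_ext d R K g hlip (fun x hx => by simp [hg, hrid x hx])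
  -- det positivity
  obtain ⟨η, hη, hdet⟩ : ∃ η > 0, ∀ M : (EuclideanSpace ℝ (Fin d)) →L[ℝ] (EuclideanSpace ℝ (Fin d)), ‖M‖ < η →
      0 < (ContinuousLinearMap.id ℝ (EuclideanSpace ℝ (Fin d)) + M).det := by
    have hc : Continuous fun M : (EuclideanSpace ℝ (Fin d)) →L[ℝ] (EuclideanSpace ℝ (Fin d)) => (ContinuousLinearMap.id ℝ (EuclideanSpace ℝ (Fin d)) + M).det :=
      ContinuousLinearMap.continuous_det.comp (continuous_const.add continuous_id)
    have h1 : (0:ℝ) < (ContinuousLinearMap.id ℝ (EuclideanSpace ℝ (Fin d)) + 0).det := by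
      simp [ContinuousLinearMap.det]
    have := hc.continuousAt.eventually (lt_mem_nhds h1)
    obtain ⟨η, hη, h⟩ := Metric.eventually_nhds_iff.1 this
    exact ⟨η, hη, fun M hM => h (by simpa using hM)⟩
  set δ := min (min η 1) 1 / K with hδ
  have hδpos : 0 < δ := by positivity
  obtain ⟨τ, c, hτ, hcsum, hint⟩ := det_interp d δ hδpos
  set B := Metric.ball (0:(EuclideanSpace ℝ (Fin d))) R with hB
  set vol := (MeasureTheory.volume : MeasureTheory.Measure (EuclideanSpace ℝ (Fin d))).real B with hvol
  have hvolpos : 0 < vol := by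
    rw [hvol, MeasureTheory.measureReal_def]
    exact ENNReal.toReal_pos (Metric.measure_ball_pos _ _ hR).ne' MeasureTheory.measure_ball_lt_top.ne
  have hBsub : ∀ x ∈ B, ‖x‖ ≤ R := fun x hx => le_of_lt (by simpa [hB] using hx)
  -- small t
  have hsmall : ∀ t : ℝ, 0 < t → t < δ →
      ∫ x in B, (ContinuousLinearMap.id ℝ (EuclideanSpace ℝ (Fin d)) + t • fderiv ℝ g x).det = vol := by
    intro t ht htδ
    have htK : t * K < min η 1 := by
      rw [hδ, lt_div_iff₀ hKpos] at htδ
      exact htδ.trans_le (min_le_left _ _)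
    have htK1 : t * K < 1 := htK.trans_le (min_le_right _ _)
    have ht1 : t < 1 := by
      have : (1:ℝ) ≤ K := by rw [hKv]; exact le_max_right _ _
      nlinarith
    have hderiv : ∀ x ∈ B, HasFDerivWithinAt (fun x => x + t • g x)
        (ContinuousLinearMap.id ℝ (EuclideanSpace ℝ (Fin d)) + t • fderiv ℝ g x) B x := fun x hx =>
      ((hasFDerivAt_id x).add ((hgd x (hBsub x hx)).hasFDerivAt.const_smul t)).hasFDerivWithinAt
    have hinj : Set.InjOn (fun x => x + t • g x) B := by
      intro x hx y hy hxy
      have h1 := hlip.dist_le_mul x (by simpa using hBsub x hx) y (by simpa using hBsub y hy)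
      simp only at hxy
      have h2 : x - y = t • (g y - g x) := by
        rw [smul_sub, sub_eq_sub_iff_add_eq_add, hxy, add_comm]
      have h3 : dist x y ≤ t * (K * dist x y) := by
        have h5 : dist x y = t * dist (g x) (g y) := by
          rw [dist_eq_norm, h2, norm_smul, Real.norm_of_nonneg ht.le, ← dist_eq_norm, dist_comm]
        calc dist x y = t * dist (g x) (g y) := h5
          _ ≤ _ := by gcongr
      have h4 : 0 ≤ dist x y := dist_nonneg
      exact dist_eq_zero.1 (by nlinarith)
    have himg : (fun x => x + t • g x) '' B = B := by
      apply Set.Subset.antisymm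
      · rintro _ ⟨x, hx, rfl⟩
        have hx' : ‖x‖ < R := by simpa [hB] using hx
        have : x + t • g x = (1 - t) • x + t • r x := by simp only [hg]; module
        simp only [hB, mem_ball_zero_iff]
        rw [this]
        calc ‖(1 - t) • x + t • r x‖ ≤ ‖(1 - t) • x‖ + ‖t • r x‖ := norm_add_le _ _
          _ = (1 - t) * ‖x‖ + t * R := by
            rw [norm_smul, norm_smul, Real.norm_of_nonneg ht.le, Real.norm_of_nonneg (by linarith),
              hrS x hx'.le]
          _ < R := by nlinarith
      · intro y hy
        have hy' : ‖y‖ < R := by simpa [hB] using hy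
        set G := (Metric.closedBall (0:(EuclideanSpace ℝ (Fin d))) R).indicator g with hG
        have hcon : ContractingWith (Real.toNNReal t * K) (fun x => y - t • G x) := by
          constructor
          · rw [← NNReal.coe_lt_coe]
            simpa [Real.coe_toNNReal _ ht.le] using htK1
          · refine LipschitzWith.of_dist_le_mul fun a b => ?_
            rw [dist_sub_left, dist_smul₀, Real.norm_of_nonneg ht.le]
            push_cast
            rw [Real.coe_toNNReal _ ht.le, mul_assoc]
            gcongr
            exact hlipE.dist_le_mul a b
        have hfix := hcon.fixedPoint_isFixedPt
        set x := ContractingWith.fixedPoint _ hcon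
        have hfix' : y - t • G x = x := hfix
        have hxy : x + t • G x = y := by nth_rewrite 1 [← hfix']; abel
        by_cases hx : ‖x‖ ≤ R
        · have hGx : G x = g x := Set.indicator_of_mem (by simpa using hx) _
          rw [hGx] at hxy
          refine ⟨x, ?_, hxy⟩
          rcases hx.lt_or_eq with h | h
          · simpa [hB] using h
          · exfalso
            have : g x = 0 := by simp [hg, hrid x h]
            rw [this] at hxy
            simp at hxy
            rw [← hxy] at hy'; linarith
        · exfalso
          have hGx : G x = 0 := Set.indicator_of_notMem (by simpa using hx) _
          rw [hGx] at hxy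
          simp at hxy
          rw [← hxy] at hy'; linarith
    have hch := MeasureTheory.integral_image_eq_integral_abs_det_fderiv_smul
      (MeasureTheory.volume : MeasureTheory.Measure (EuclideanSpace ℝ (Fin d))) (Metric.isOpen_ball.measurableSet) hderiv hinj
      (fun _ => (1:ℝ))
    rw [himg, MeasureTheory.setIntegral_const] at hch
    simp only [smul_eq_mul, mul_one] at hch
    rw [hvol, hch]
    refine MeasureTheory.setIntegral_congr_fun Metric.isOpen_ball.measurableSet fun x hx => ?_
    refine (abs_of_pos (hdet _ ?_)).symm
    rw [norm_smul, Real.norm_of_nonneg ht.le]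
    have := hbound x (by simpa using hBsub x hx)
    calc t * ‖fderiv ℝ g x‖ ≤ t * K := by gcongr
      _ < η := htK.trans_le (min_le_left _ _)
  have hInt : ∀ t : ℝ, MeasureTheory.IntegrableOn
      (fun x => (ContinuousLinearMap.id ℝ (EuclideanSpace ℝ (Fin d)) + t • fderiv ℝ g x).det) B := by
    intro t
    refine MeasureTheory.IntegrableOn.mono_set ?_ Metric.ball_subset_closedBall
    apply ContinuousOn.integrableOn_compact (isCompact_closedBall _ _)
    exact ContinuousLinearMap.continuous_det.comp_continuousOn
      (continuousOn_const.add (hgf.const_smul t))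
  have hone : ∫ x in B, (ContinuousLinearMap.id ℝ (EuclideanSpace ℝ (Fin d)) + fderiv ℝ g x).det = vol := by
    rw [MeasureTheory.integral_congr_ae (Eventually.of_forall fun x => hint (fderiv ℝ g x))]
    rw [MeasureTheory.integral_finsetSum _ (fun i _ => (hInt (τ i)).const_mul (c i))]
    simp_rw [MeasureTheory.integral_const_mul]
    rw [Finset.sum_congr rfl fun i _ => by rw [hsmall (τ i) (hτ i).1 (hτ i).2], ← Finset.sum_mul,
      hcsum, one_mul]
  have hzero : ∫ x in B, (ContinuousLinearMap.id ℝ (EuclideanSpace ℝ (Fin d)) + fderiv ℝ g x).det = 0 := by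
    rw [MeasureTheory.setIntegral_congr_fun (g := fun _ => (0:ℝ)) Metric.isOpen_ball.measurableSet]
    · simp
    intro x hx
    have hrd : DifferentiableAt ℝ r x := (hr x (hBsub x hx)).differentiableAt (by norm_num)
    have h1 : ContinuousLinearMap.id ℝ (EuclideanSpace ℝ (Fin d)) + fderiv ℝ g x = fderiv ℝ r x := by
      have : HasFDerivAt g (fderiv ℝ r x - ContinuousLinearMap.id ℝ (EuclideanSpace ℝ (Fin d))) x :=
        hrd.hasFDerivAt.sub (hasFDerivAt_id x)
      rw [this.fderiv]; abel
    simp only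
    rw [h1]
    by_contra hne
    have hu : IsUnit (fderiv ℝ r x : (EuclideanSpace ℝ (Fin d)) →ₗ[ℝ] (EuclideanSpace ℝ (Fin d))) := by
      rw [LinearMap.isUnit_iff_isUnit_det]
      exact isUnit_iff_ne_zero.2 hne
    obtain ⟨v, hv⟩ := ((Module.End.isUnit_iff _).1 hu).surjective (r x)
    have hd := hrd.hasFDerivAt.norm_sq
    have hd2 : HasFDerivAt (fun y => ‖r y‖ ^ 2) (0 : (EuclideanSpace ℝ (Fin d)) →L[ℝ] ℝ) x := by
      refine (hasFDerivAt_const (R^2) x).congr_of_eventuallyEq ?_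
      filter_upwards [Metric.isOpen_ball.mem_nhds hx] with y hy
      rw [hrS y (hBsub y hy)]
    have h3 := congrArg (fun L => L v) (hd.unique hd2)
    have hv' : fderiv ℝ r x v = r x := hv
    simp [hv', hrS x (hBsub x hx)] at h3
    exact hR.ne' h3
  linarith

lemma brouwer_smooth (d : ℕ) (R : ℝ) (hR : 0 < R)
    (h : EuclideanSpace ℝ (Fin d) → EuclideanSpace ℝ (Fin d))
    (hc : ∀ x, ‖x‖ ≤ R → ContDiffAt ℝ 1 h x)
    (hm : ∀ x, ‖x‖ ≤ R → ‖h x‖ ≤ R) : ∃ x, ‖x‖ ≤ R ∧ h x = x := by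
  by_contra! hne
  set u : EuclideanSpace ℝ (Fin d) → EuclideanSpace ℝ (Fin d) := fun x => x - h x with hu
  set b : EuclideanSpace ℝ (Fin d) → ℝ := fun x => inner ℝ x (u x) with hb
  set a : EuclideanSpace ℝ (Fin d) → ℝ := fun x => ‖u x‖ ^ 2 with ha
  set D : EuclideanSpace ℝ (Fin d) → ℝ := fun x => b x ^ 2 + a x * (R ^ 2 - ‖x‖ ^ 2) with hD
  have hapos : ∀ x, ‖x‖ ≤ R → 0 < a x := by
    intro x hx
    have : u x ≠ 0 := by
      simp only [hu]; exact sub_ne_zero.2 (hne x hx).symm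
    simp only [ha]; positivity
  have hbpos : ∀ x, ‖x‖ = R → 0 < b x := by
    intro x hx
    have h1 := hapos x hx.le
    simp only [ha, hu] at h1
    rw [norm_sub_sq_real] at h1
    simp only [hb, hu, inner_sub_right, real_inner_self_eq_norm_sq]
    have h2 := hm x hx.le
    have h3 : ‖h x‖ ^ 2 ≤ R ^ 2 := by gcongr
    rw [hx] at h1 ⊢
    linarith
  have hDpos : ∀ x, ‖x‖ ≤ R → 0 < D x := by
    intro x hx
    rcases hx.lt_or_eq with h1 | h1
    · have h2 := hapos x hx
      have h3 : 0 < R ^ 2 - ‖x‖ ^ 2 := by nlinarith [norm_nonneg x]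
      simp only [hD]; positivity
    · have := hbpos x h1
      simp only [hD, h1]
      simp; positivity
  refine no_retraction d R hR (fun x => x + ((-b x + √(D x)) / a x) • u x) ?_ ?_ ?_
  · intro x hx
    have hu' : ContDiffAt ℝ 1 u x := contDiffAt_id.sub (hc x hx)
    have hb' : ContDiffAt ℝ 1 b x := contDiffAt_id.inner ℝ hu'
    have ha' : ContDiffAt ℝ 1 a x := hu'.norm_sq ℝ
    have hD' : ContDiffAt ℝ 1 D x :=
      (hb'.pow 2).add (ha'.mul (contDiffAt_const.sub (contDiffAt_id.norm_sq ℝ)))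
    exact contDiffAt_id.add (((hb'.neg.add (hD'.sqrt (hDpos x hx).ne')).div ha' (hapos x hx).ne').smul hu')
  · intro x hx
    have h1 := hapos x hx
    have h2 := Real.sq_sqrt (hDpos x hx).le
    set t := (-b x + √(D x)) / a x with ht
    have h3 : a x * t = -b x + √(D x) := by rw [ht]; field_simp
    have h4 : ‖x + t • u x‖ ^ 2 = R ^ 2 := by
      rw [norm_add_sq_real, inner_smul_right, norm_smul, mul_pow, Real.norm_eq_abs, sq_abs]
      change ‖x‖ ^ 2 + 2 * (t * b x) + t ^ 2 * a x = R ^ 2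
      have h5 : √(D x) = a x * t + b x := by linarith
      rw [h5] at h2
      simp only [hD] at h2
      have h6 : a x * (‖x‖ ^ 2 + 2 * (t * b x) + t ^ 2 * a x) = a x * R ^ 2 := by linarith
      exact mul_left_cancel₀ h1.ne' h6
    exact (pow_left_inj₀ (norm_nonneg _) hR.le (by norm_num)).1 h4
  · intro x hx
    have h1 : D x = b x ^ 2 := by simp [hD, hx]
    rw [h1, Real.sqrt_sq (hbpos x hx).le]
    simp

lemma approx_fix (d : ℕ) (X : Set (EuclideanSpace ℝ (Fin d)))
    (hcomp : IsCompact X) (hconv : Convex ℝ X) (hne : X.Nonempty)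
    (g : EuclideanSpace ℝ (Fin d) → EuclideanSpace ℝ (Fin d)) (hg : ∀ x ∈ X, g x ∈ X)
    (ε : ℝ) (hε : 0 < ε) :
    ∃ z ∈ X, z ∈ convexHull ℝ (g '' {p | p ∈ X ∧ dist p z < ε}) := by
  classical
  obtain ⟨R, hR, hXR⟩ : ∃ R > 0, ∀ x ∈ X, ‖x‖ ≤ R := hcomp.isBounded.exists_pos_norm_le
  obtain ⟨T, hTs, hTf, hTc⟩ := (isCompact_closedBall (0 : EuclideanSpace ℝ (Fin d)) R).finite_cover_balls
    (half_pos hε)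
  choose p hpX hp using fun z => hcomp.exists_infDist_eq_dist hne z
  let ψ : ∀ t : EuclideanSpace ℝ (Fin d), ContDiffBump t := fun t => ⟨ε/4, ε/2, by linarith, by linarith⟩
  have hψs : ∀ t z, ψ t z ≠ 0 → dist z t < ε / 2 := by
    intro t z hz
    have : z ∈ Function.support (ψ t) := hz
    rw [(ψ t).support_eq] at this
    exact this
  have hψ : ∀ t z, dist z t < ε / 2 → 0 < ψ t z := fun t z hz => (ψ t).pos_of_mem_ball hz
  set S := hTf.toFinset
  have hpos : ∀ z, ‖z‖ ≤ R → 0 < ∑ t ∈ S, ψ t z := by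
    intro z hz
    have := hTc (show z ∈ Metric.closedBall 0 R by simpa using hz)
    simp only [Set.mem_iUnion] at this
    obtain ⟨t, ht, hzt⟩ := this
    exact Finset.sum_pos' (fun i _ => (ψ i).nonneg) ⟨t, by simpa [S] using ht, hψ t z hzt⟩
  set h : EuclideanSpace ℝ (Fin d) → EuclideanSpace ℝ (Fin d) :=
    fun z => S.centerMass (fun t => ψ t z) (fun t => g (p t)) with hh
  have hhX : ∀ z, ‖z‖ ≤ R → h z ∈ X := fun z hz =>
    hconv.centerMass_mem (fun i _ => (ψ i).nonneg) (hpos z hz) (fun i _ => hg _ (hpX i))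
  obtain ⟨z, hz, hfix⟩ := brouwer_smooth d R hR h (by
    intro x hx
    have h1 : ∀ t, ContDiffAt ℝ 1 (fun z => ψ t z) x := fun t => (ψ t).contDiff.contDiffAt
    have hA : ContDiffAt ℝ 1 (fun z => ∑ t ∈ S, ψ t z) x := ContDiffAt.sum fun t _ => h1 t
    have hB : ContDiffAt ℝ 1 (fun z => ∑ t ∈ S, ψ t z • g (p t)) x :=
      ContDiffAt.sum fun t _ => (h1 t).smul contDiffAt_const
    exact (hA.inv (hpos x hx).ne').smul hB) (fun x hx => hXR _ (hhX x hx))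
  have hzX : z ∈ X := hfix ▸ hhX z hz
  refine ⟨z, hzX, ?_⟩
  have h2 : h z ∈ convexHull ℝ (g '' {p | p ∈ X ∧ dist p z < ε}) := by
    simp only [hh]
    rw [← Finset.centerMass_filter_ne_zero]
    refine Finset.centerMass_mem_convexHull _ (fun i _ => (ψ i).nonneg) ?_ ?_
    · rw [Finset.sum_filter_ne_zero]; exact hpos z hz
    · intro t ht
      have h3 := hψs t z (Finset.mem_filter.1 ht).2
      refine ⟨p t, ⟨hpX t, ?_⟩, rfl⟩
      have h4 : dist t (p t) ≤ dist t z := by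
        rw [← hp t]; exact Metric.infDist_le_dist_of_mem hzX
      have h5 := dist_triangle (p t) t z
      rw [dist_comm (p t) t] at h5
      rw [dist_comm z t] at h3
      linarith
  rwa [hfix] at h2

/-- Cromme–Diener-style fixed point result: for any compact convex `X ⊆ ℝ^d` with at
least two points and any self-map `f` of `X` (no continuity assumed), there is a point
`x*` of `X` lying in the convex hull of the set of limit values `y` of `f` along
sequences in `X \ {x*}` converging to `x*`. -/
theorem stmt7 (d : ℕ) (X : Set (EuclideanSpace ℝ (Fin d)))
    (hcomp : IsCompact X) (hconv : Convex ℝ X)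
    (htwo : ∃ x ∈ X, ∃ y ∈ X, x ≠ y)
    (f : EuclideanSpace ℝ (Fin d) → EuclideanSpace ℝ (Fin d))
    (hf : ∀ x ∈ X, f x ∈ X) :
    ∃ x ∈ X, x ∈ convexHull ℝ {y : EuclideanSpace ℝ (Fin d) | y ∈ X ∧
      ∃ xs : ℕ → EuclideanSpace ℝ (Fin d),
        (∀ n, xs n ∈ X) ∧ (∀ n, xs n ≠ x) ∧
        Tendsto xs atTop (nhds x) ∧
        Tendsto (fun n => f (xs n)) atTop (nhds y)} := by
  set F : EuclideanSpace ℝ (Fin d) → Set (EuclideanSpace ℝ (Fin d)) := fun x =>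
    {y : EuclideanSpace ℝ (Fin d) | y ∈ X ∧
      ∃ xs : ℕ → EuclideanSpace ℝ (Fin d),
        (∀ n, xs n ∈ X) ∧ (∀ n, xs n ≠ x) ∧
        Tendsto xs atTop (nhds x) ∧
        Tendsto (fun n => f (xs n)) atTop (nhds y)} with hF
  change ∃ x ∈ X, x ∈ convexHull ℝ (F x)
  have hone : Tendsto (fun n : ℕ => 1 / ((n:ℝ) + 1)) atTop (nhds 0) :=
    tendsto_one_div_add_atTop_nhds_zero_nat
  have hseq : ∀ (x : EuclideanSpace ℝ (Fin d)) (q : ℕ → EuclideanSpace ℝ (Fin d)),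
      (∀ n, q n ∈ X) → (∀ n, q n ≠ x) → Tendsto q atTop (nhds x) →
      ∃ y ∈ F x, ∃ φ : ℕ → ℕ, StrictMono φ ∧ Tendsto (fun n => f (q (φ n))) atTop (nhds y) := by
    intro x q hqX hqne hq
    obtain ⟨y, hy, φ, hφ, hlim⟩ := hcomp.tendsto_subseq (x := fun n => f (q n)) (fun n => hf _ (hqX n))
    exact ⟨y, ⟨hy, fun n => q (φ n), fun n => hqX _, fun n => hqne _, hq.comp hφ.tendsto_atTop, hlim⟩,
      φ, hφ, hlim⟩
  have hFne : ∀ x ∈ X, (F x).Nonempty := by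
    intro x hx
    obtain ⟨w, hw, hwx⟩ : ∃ w ∈ X, w ≠ x := by
      obtain ⟨a, ha, b, hb, hab⟩ := htwo
      by_cases h : a = x
      · exact ⟨b, hb, fun hbx => hab (h.trans hbx.symm)⟩
      · exact ⟨a, ha, h⟩
    obtain ⟨y, hy, -⟩ := hseq x (fun n => x + (1 / ((n:ℝ) + 1)) • (w - x)) (by
        intro n
        refine hconv.add_smul_sub_mem hx hw ⟨by positivity, ?_⟩
        rw [div_le_one (by positivity)]
        linarith [(Nat.cast_nonneg n : (0:ℝ) ≤ n)]) (by
        intro n h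
        rw [add_eq_left, smul_eq_zero] at h
        rcases h with h | h
        · exact absurd h (by positivity)
        · exact hwx (sub_eq_zero.1 h)) (by
        have := (tendsto_const_nhds (x := x)).add (hone.smul_const (w - x))
        simpa using this)
    exact ⟨y, hy⟩
  have hFcomp : ∀ x, IsCompact (F x) := by
    intro x
    refine hcomp.of_isClosed_subset ?_ (fun y hy => hy.1)
    refine isClosed_of_closure_subset fun y hy => ?_
    have hyX : y ∈ X := by
      have := closure_mono (fun z (hz : z ∈ F x) => hz.1) hy
      rwa [hcomp.isClosed.closure_eq] at this
    have hex : ∀ n : ℕ, ∃ q, q ∈ X ∧ q ≠ x ∧ dist q x < 1 / ((n:ℝ) + 1) ∧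
        dist (f q) y < 1 / ((n:ℝ) + 1) := by
      intro n
      have hn : 0 < 1 / ((n:ℝ) + 1) := by positivity
      obtain ⟨y', hy', hd⟩ := Metric.mem_closure_iff.1 hy _ (half_pos hn)
      obtain ⟨-, xs, h1, h2, h3, h4⟩ := hy'
      obtain ⟨k, hk1, hk2⟩ := ((Metric.tendsto_nhds.1 h3 _ hn).and
        (Metric.tendsto_nhds.1 h4 _ (half_pos hn))).exists
      refine ⟨xs k, h1 k, h2 k, hk1, ?_⟩
      have := dist_triangle (f (xs k)) y' y
      rw [dist_comm y' y] at this
      linarith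
    choose q h1 h2 h3 h4 using hex
    refine ⟨hyX, q, h1, h2, ?_, ?_⟩
    · exact tendsto_iff_dist_tendsto_zero.2
        (squeeze_zero (fun _ => dist_nonneg) (fun n => (h3 n).le) hone)
    · exact tendsto_iff_dist_tendsto_zero.2
        (squeeze_zero (fun _ => dist_nonneg) (fun n => (h4 n).le) hone)
  have husc : ∀ x, ∀ ε > 0, ∃ δ > 0, ∀ p ∈ X, dist p x < δ →
      F p ⊆ Metric.cthickening ε (convexHull ℝ (F x)) := by
    intro x ε hε
    obtain ⟨δ, hδ, h⟩ : ∃ δ > 0, ∀ q ∈ X, q ≠ x → dist q x < δ →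
        f q ∈ Metric.thickening ε (convexHull ℝ (F x)) := by
      by_contra! hcon
      choose q h1 h2 h3 h4 using fun n : ℕ => hcon (1 / ((n:ℝ) + 1)) (by positivity)
      obtain ⟨y, hy, φ, hφ, hlim⟩ := hseq x q h1 h2 (tendsto_iff_dist_tendsto_zero.2
        (squeeze_zero (fun _ => dist_nonneg) (fun n => (h3 n).le) hone))
      have hyC : y ∈ Metric.thickening ε (convexHull ℝ (F x)) :=
        Metric.self_subset_thickening hε _ (subset_convexHull ℝ _ hy)
      obtain ⟨n, hn⟩ := (hlim.eventually (Metric.isOpen_thickening.mem_nhds hyC)).exists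
      exact h4 _ hn
    refine ⟨δ, hδ, fun p hp hpx y hy => ?_⟩
    by_cases hpe : p = x
    · subst hpe
      exact Metric.self_subset_cthickening _ (subset_convexHull ℝ _ hy)
    · obtain ⟨-, xs, h1, h2, h3, h4⟩ := hy
      refine Metric.isClosed_cthickening.mem_of_tendsto h4 ?_
      filter_upwards [h3.eventually_ne hpe, h3.eventually (Metric.isOpen_ball.mem_nhds hpx)] with n hn1 hn2
      exact Metric.thickening_subset_cthickening _ _ (h _ (h1 n) hn1 hn2)
  have hXne : X.Nonempty := by
    obtain ⟨a, ha, -⟩ := htwo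
    exact ⟨a, ha⟩
  have hsel : ∀ p, ∃ y, p ∈ X → y ∈ F p := by
    intro p
    by_cases hp : p ∈ X
    · obtain ⟨y, hy⟩ := hFne p hp
      exact ⟨y, fun _ => hy⟩
    · exact ⟨0, fun h => absurd h hp⟩
  choose g hg using hsel
  choose z hzX hz using fun n : ℕ => approx_fix d X hcomp hconv hXne g (fun x hx => (hg x hx).1)
    (1 / ((n:ℝ) + 1)) (by positivity)
  obtain ⟨x, hx, φ, hφ, hlim⟩ := hcomp.tendsto_subseq hzX
  refine ⟨x, hx, ?_⟩
  have hcl : IsClosed (convexHull ℝ (F x)) := (isCompact_convexHull_aux d _ (hFcomp x)).isClosed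
  rw [← hcl.closure_eq, Metric.closure_eq_iInter_cthickening]
  simp only [Set.mem_iInter]
  intro ε hε
  obtain ⟨δ, hδ, h⟩ := husc x ε hε
  refine Metric.isClosed_cthickening.mem_of_tendsto hlim ?_
  filter_upwards [Metric.tendsto_nhds.1 hlim _ (half_pos hδ),
    (hone.comp hφ.tendsto_atTop).eventually (gt_mem_nhds (half_pos hδ))] with n hn1 hn2
  refine convexHull_min ?_ ((convex_convexHull ℝ _).cthickening ε) (hz (φ n))
  rintro _ ⟨p, ⟨hpX, hpz⟩, rfl⟩
  refine h p hpX ?_ (hg p hpX)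
  have := dist_triangle p (z (φ n)) x
  simp only [Function.comp] at hn1 hn2
  linarith
end

section
/- Let n ≥ 1 be a natural number, let b̄ > 0, and let ε be a real number with 0 ≤ ε and (n−1)·(1+ε) ≤ n. Let p̃ be a real number with −1 ≤ p̃ ≤ 1 + b̄, let t = min(max(p̃, 0), b̄) be its truncation to [0, b̄], let D be a natural number with D ≤ n − 1, and let U ∈ {0, 1}. Then the updated price f = t + ((1 + ε − (ε/b̄)·t)·D − U)/n satisfies −1 ≤ f ≤ 1 + b̄. -/
/-- Closure of the auxiliary price space `[-1, 1 + b̄]` under the price update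
function `f_TF` of A-CEEI-TF (coordinatewise form). -/
theorem stmt8 (n : ℕ) (hn : 1 ≤ n) (bbar : ℝ) (hb : 0 < bbar)
    (ε : ℝ) (hε : 0 ≤ ε) (hε' : ((n : ℝ) - 1) * (1 + ε) ≤ (n : ℝ))
    (pt : ℝ) (hp1 : -1 ≤ pt) (hp2 : pt ≤ 1 + bbar)
    (D : ℕ) (hD : (D : ℝ) ≤ (n : ℝ) - 1)
    (U : ℝ) (hU : U = 0 ∨ U = 1) :
    -1 ≤ min (max pt 0) bbar +
        ((1 + ε - (ε / bbar) * min (max pt 0) bbar) * (D : ℝ) - U) / (n : ℝ) ∧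
      min (max pt 0) bbar +
        ((1 + ε - (ε / bbar) * min (max pt 0) bbar) * (D : ℝ) - U) / (n : ℝ) ≤
        1 + bbar := by
  have hn' : (1 : ℝ) ≤ n := by exact_mod_cast hn
  have ht0 : 0 ≤ min (max pt 0) bbar := le_min (le_max_right _ _) hb.le
  have htb : min (max pt 0) bbar ≤ bbar := min_le_right _ _
  generalize min (max pt 0) bbar = t at *
  have hs0 : 0 ≤ ε / bbar * t := by positivity
  have hs1 : ε / bbar * t ≤ ε := by
    rw [div_mul_eq_mul_div, div_le_iff₀ hb]
    exact mul_le_mul_of_nonneg_left htb hε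
  generalize ε / bbar * t = s at *
  have hD0 : (0 : ℝ) ≤ D := Nat.cast_nonneg D
  have h0 : 0 ≤ (1 + ε - s) * (D : ℝ) := mul_nonneg (by linarith) hD0
  have h1 : (1 + ε - s) * (D : ℝ) ≤ n := by
    have a1 : (1 + ε - s) * (D : ℝ) ≤ (1 + ε) * D :=
      mul_le_mul_of_nonneg_right (by linarith) hD0
    have a2 : (1 + ε) * (D : ℝ) ≤ (1 + ε) * ((n : ℝ) - 1) :=
      mul_le_mul_of_nonneg_left hD (by linarith)
    linarith
  have hU0 : 0 ≤ U ∧ U ≤ 1 := by rcases hU with h | h <;> subst h <;> norm_num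
  have hnp : (0 : ℝ) < n := by linarith
  have q0 : -1 ≤ ((1 + ε - s) * (D : ℝ) - U) / (n : ℝ) := by
    rw [le_div_iff₀ hnp]; linarith [hU0.2]
  have q1 : ((1 + ε - s) * (D : ℝ) - U) / (n : ℝ) ≤ 1 := by
    rw [div_le_iff₀ hnp]; linarith [hU0.1]
  constructor <;> linarith
end

section
/- Let n ≥ 1 be a natural number, let b̄ > 0, and let ε ≥ 0. Let p̃ be a real number with −1 ≤ p̃ ≤ 1 + b̄, let t = min(max(p̃, 0), b̄), let D be a natural number and U ∈ {0, 1}, subject to the demand-consistency conditions: not (D ≥ 1 and U = 1), and if t = b̄ then D = 0 and U = 1. If p̃ is a fixed point of the price update, i.e. p̃ = t + ((1 + ε − (ε/b̄)·t)·D − U)/n, then D = 0, and if U = 1 then t = 0. -/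
/-- Coordinatewise admissibility of the price update function `f_TF` of A-CEEI-TF:
a fixed point of the update induces relaxed market clearing at the agent, i.e.
the agent has no unreciprocated demand (`D = 0`) and may be under-demanded
(`U = 1`) only if its truncated price is `0`. -/
theorem stmt9 (n : ℕ) (hn : 1 ≤ n) (bbar : ℝ) (hb : 0 < bbar)
    (ε : ℝ) (hε : 0 ≤ ε)
    (pt : ℝ) (hp1 : -1 ≤ pt) (hp2 : pt ≤ 1 + bbar)
    (D : ℕ) (U : ℝ) (hU : U = 0 ∨ U = 1)
    (hDU : ¬(1 ≤ D ∧ U = 1))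
    (hbudget : min (max pt 0) bbar = bbar → D = 0 ∧ U = 1)
    (hfix : pt = min (max pt 0) bbar +
      ((1 + ε - (ε / bbar) * min (max pt 0) bbar) * (D : ℝ) - U) / (n : ℝ)) :
    D = 0 ∧ (U = 1 → min (max pt 0) bbar = 0) := by
  have hn0 : (0 : ℝ) < n := by exact_mod_cast hn
  rcases le_or_gt bbar pt with h | h
  · exfalso
    have ht : min (max pt 0) bbar = bbar := min_eq_right (le_trans h (le_max_left _ _))
    obtain ⟨hD, hU1⟩ := hbudget ht
    rw [ht, hD, hU1] at hfix
    have h1 : (0 : ℝ) < 1 / n := by positivity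
    have h2 : ((1 + ε - (ε / bbar) * bbar) * ((0 : ℕ) : ℝ) - 1) / (n : ℝ) = -(1 / n) := by
      push_cast
      ring
    rw [h2] at hfix
    linarith
  · have ht : min (max pt 0) bbar = max pt 0 := min_eq_left (max_le h.le hb.le)
    rw [ht] at hfix ⊢
    have ht2 : max pt 0 < bbar := max_lt h hb
    have hc : (ε / bbar) * max pt 0 ≤ ε := by
      rw [div_mul_eq_mul_div, div_le_iff₀ hb]
      exact mul_le_mul_of_nonneg_left ht2.le hε
    have hq : pt ≤ max pt 0 := le_max_left _ _
    have hD : D = 0 := by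
      by_contra hne
      have hD1 : 1 ≤ D := Nat.one_le_iff_ne_zero.mpr hne
      have hU0 : U = 0 := hU.resolve_right fun hu => hDU ⟨hD1, hu⟩
      have hDr : (0 : ℝ) < D := by exact_mod_cast hD1
      have hpos : 0 < ((1 + ε - (ε / bbar) * max pt 0) * (D : ℝ) - U) / (n : ℝ) := by
        rw [hU0, sub_zero]
        exact div_pos (mul_pos (by linarith) hDr) hn0
      linarith
    refine ⟨hD, fun hu => ?_⟩
    by_contra hne
    have hpt : max pt 0 = pt := by
      rcases max_choice pt 0 with h1 | h1
      · exact h1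
      · exact absurd h1 hne
    rw [hpt, hD, hu] at hfix
    have h1 : (0 : ℝ) < 1 / n := by positivity
    have h2 : ((1 + ε - (ε / bbar) * pt) * ((0 : ℕ) : ℝ) - 1) / (n : ℝ) = -(1 / n) := by
      push_cast
      ring
    rw [h2] at hfix
    linarith
end

section
/- Let n ≥ 2 be a natural number and let b̄ be a real number with b̄ ≤ 1 + 1/n. Let S be a finite set of indices with 1 ≤ |S| ≤ n − 1, let p assign a nonnegative real price to each element of S, and suppose Σ_{k ∈ S} p(k) ≤ b̄. Then for every real number β ≥ 1 there exists r ∈ S such that Σ_{k ∈ S\{r}} p(k) ≤ β. -/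
/-- Key inequality for envy bounded by a single teammate in A-CEEI-TF: if the
total price of a team `S` of at most `n - 1` agents is within the budget supremum
`b̄ ≤ 1 + 1/n`, then removing some single member `r` makes the team affordable for
any budget `β ≥ 1`. -/
theorem stmt10 (n : ℕ) (hn : 2 ≤ n) (bbar : ℝ) (hbb : bbar ≤ 1 + 1 / (n : ℝ))
    (S : Finset ℕ) (hS1 : 1 ≤ S.card) (hS2 : S.card ≤ n - 1)
    (p : ℕ → ℝ) (hp : ∀ k ∈ S, 0 ≤ p k)
    (hsum : ∑ k ∈ S, p k ≤ bbar)
    (β : ℝ) (hβ : 1 ≤ β) :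
    ∃ r ∈ S, ∑ k ∈ S.erase r, p k ≤ β := by
  by_contra! h
  have hn0 : (0 : ℝ) < n := by
    have : 0 < n := by omega
    exact_mod_cast this
  have key : ∀ r ∈ S, p r ≤ 1 / (n : ℝ) := by
    intro r hr
    have h1 := h r hr
    have h2 := Finset.add_sum_erase S p hr
    linarith
  have h3 : ∑ k ∈ S, p k ≤ S.card * (1 / (n : ℝ)) := by
    have := Finset.sum_le_card_nsmul S p _ key
    rwa [nsmul_eq_mul] at this
  have h4 : (S.card : ℝ) * (1 / (n : ℝ)) ≤ 1 := by
    rw [mul_one_div, div_le_one hn0]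
    have : S.card ≤ n := by omega
    exact_mod_cast this
  obtain ⟨r, hr⟩ := Finset.card_pos.mp hS1
  have h1 := h r hr
  have h2 := Finset.add_sum_erase S p hr
  have h5 := hp r hr
  linarith
end

section
/- Let N be a finite set of agents with additive separable utilities u : N → N → ℝ satisfying u(i,j) ≥ 0 for all i, j, let 1 ≤ k ≤ k̄ ≤ |N| be team size bounds, let p : N → ℝ be nonnegative prices, and let b ∈ ℝ be a common budget. Let Q be a partition of N into teams each of size in [k, k̄], with T(i) denoting the team containing i. Suppose that for every agent i: (affordability) Σ_{j ∈ T(i)\{i}} p(j) ≤ b, and (demand optimality) for every subset S ⊆ N\{i} with k ≤ |S| + 1 ≤ k̄ and Σ_{j ∈ S} p(j) ≤ b, one has Σ_{j ∈ S} u(i,j) ≤ Σ_{j ∈ T(i)\{i}} u(i,j). Then Q is envy-free: for all agents i and j, Σ_{l ∈ T(j)\{i,j}} u(i,l) ≤ Σ_{l ∈ T(i)\{i}} u(i,l). -/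
/-- A-CEEI-TF with exactly equal budgets and exact market clearing (same induced
partition at each stage) is envy-free: if each agent's team is affordable and is
its most-preferred affordable team of legal size, then no agent envies another.
The partition is encoded by `T : α → Finset α` assigning to each agent its team. -/
theorem stmt11 {α : Type*} [Fintype α] [DecidableEq α]
    (u : α → α → ℝ) (hu : ∀ i j, 0 ≤ u i j)
    (k kbar : ℕ) (hk : 1 ≤ k) (hkk : k ≤ kbar) (hkn : kbar ≤ Fintype.card α)
    (p : α → ℝ) (hp : ∀ i, 0 ≤ p i) (b : ℝ)
    (T : α → Finset α)
    (hmem : ∀ i, i ∈ T i)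
    (hpart : ∀ i j, j ∈ T i → T j = T i)
    (hsize : ∀ i, k ≤ (T i).card ∧ (T i).card ≤ kbar)
    (hafford : ∀ i, ∑ j ∈ (T i).erase i, p j ≤ b)
    (hopt : ∀ i (S : Finset α), i ∉ S → k ≤ S.card + 1 → S.card + 1 ≤ kbar →
      ∑ j ∈ S, p j ≤ b → ∑ j ∈ S, u i j ≤ ∑ j ∈ (T i).erase i, u i j) :
    ∀ i j : α, ∑ l ∈ ((T j).erase j).erase i, u i l ≤ ∑ l ∈ (T i).erase i, u i l := by
  intro i j
  by_cases h : i ∈ T j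
  · rw [hpart j i h]
    exact Finset.sum_le_sum_of_subset_of_nonneg
      (Finset.erase_subset_erase i (Finset.erase_subset j (T j))) (fun l _ _ => hu i l)
  · have hi : i ∉ (T j).erase j := fun h' => h (Finset.mem_of_mem_erase h')
    have hc := Finset.card_erase_add_one (hmem j)
    rw [Finset.erase_eq_of_notMem hi]
    exact hopt i _ hi (hc ▸ (hsize j).1) (hc ▸ (hsize j).2) (hafford j)
end
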